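/- arXiv:2508.10708 — 4 statements merged into one kernel-verified Lean document; each statement's English description precedes it below -/
import Mathlib

section
/- For every n ≥ 1 one has the Cholesky-type factorization A_n = − F_nᵀ F_n, where F_n and A_n are the recursively defined lower unitriangular and symmetric matrices associated with a sequence of n blow-ups. -/
open Matrix

/-- The Cholesky-type lower unitriangular matrix `F_n` associated with a sequence of
blow-ups, defined recursively by `F_1 = (1)` and `F_k = [[F_{k-1}, 0], [-e_k, 1]]`.
Here `Fmat e n` is the matrix of size `(n+1) × (n+1)`, i.e. `F_{n+1}`. -/
def Fmat (e : (k : ℕ) → Fin k → ℤ) : (n : ℕ) → Matrix (Fin (n + 1)) (Fin (n + 1)) ℤ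
  | 0 => 1
  | n + 1 => Matrix.of fun i j =>
      if hi : (i : ℕ) < n + 1 then
        if hj : (j : ℕ) < n + 1 then Fmat e n ⟨i, hi⟩ ⟨j, hj⟩ else 0
      else
        if hj : (j : ℕ) < n + 1 then - e (n + 1) ⟨j, hj⟩ else 1

/-- The self-intersection matrix `A_n` of the exceptional divisor, defined recursively by
`A_1 = (-1)` and `A_k = [[A_{k-1} - e_kᵀ e_k, e_kᵀ], [e_k, -1]]`.
Here `Amat e n` is the matrix of size `(n+1) × (n+1)`, i.e. `A_{n+1}`. -/
def Amat (e : (k : ℕ) → Fin k → ℤ) : (n : ℕ) → Matrix (Fin (n + 1)) (Fin (n + 1)) ℤ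
  | 0 => Matrix.of fun _ _ => -1
  | n + 1 => Matrix.of fun i j =>
      if hi : (i : ℕ) < n + 1 then
        if hj : (j : ℕ) < n + 1 then
          Amat e n ⟨i, hi⟩ ⟨j, hj⟩ - e (n + 1) ⟨i, hi⟩ * e (n + 1) ⟨j, hj⟩
        else e (n + 1) ⟨i, hi⟩
      else
        if hj : (j : ℕ) < n + 1 then e (n + 1) ⟨j, hj⟩ else -1

/-- **Cholesky-type factorization**: for every `n ≥ 1`, `A_n = − F_nᵀ F_n`. -/
theorem cholesky_factorization (e : (k : ℕ) → Fin k → ℤ) (n : ℕ) :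
    Amat e n = -((Fmat e n)ᵀ * Fmat e n) := by
  induction n with
  | zero =>
    ext i j
    fin_cases i
    fin_cases j
    simp [Amat, Fmat]
  | succ n ih =>
    ext i j
    rw [neg_apply, mul_apply, Fin.sum_univ_castSucc]
    refine Fin.lastCases ?_ (fun i => ?_) i <;> refine Fin.lastCases ?_ (fun j => ?_) j
    · simp [Amat, Fmat, Fin.is_le]
    · simp [Amat, Fmat, Fin.is_le]
    · simp [Amat, Fmat, Fin.is_le]
    · simp [Amat, Fmat, Fin.is_le, ih, mul_apply]
      ring
end

section
/- Assume in addition that every entry of each vector e_k lies in {0,1}. Then F_nᵀ u = 2u + α, where u is the all-ones column vector and α = ((A_n)_{11}, …, (A_n)_{nn})ᵀ is the vector of diagonal entries of A_n; equivalently, (F_nᵀ u)_i = 2 + (A_n)_{ii} for every i. -/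
open Matrix

/-- If every entry of each vector `e_k` lies in `{0,1}`, then `F_nᵀ u = 2u + diag(A_n)`,
i.e. `(F_nᵀ u)_i = 2 + (A_n)_{ii}` for every `i`, where `u` is the all-ones vector. -/
theorem transpose_mulVec_ones (e : (k : ℕ) → Fin k → ℤ) (n : ℕ)
    (h01 : ∀ k, k ≤ n → ∀ i : Fin k, e k i = 0 ∨ e k i = 1) :
    ∀ i, ((Fmat e n)ᵀ *ᵥ (fun _ => 1)) i = 2 + Amat e n i i := by
  induction n with
  | zero =>
    intro i
    fin_cases i
    simp [Fmat, Amat, mulVec, dotProduct]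
  | succ n ih =>
    intro i
    have ih' := ih fun k hk => h01 k (hk.trans n.le_succ)
    simp only [mulVec, dotProduct, transpose_apply, mul_one] at ih' ⊢
    rw [Fin.sum_univ_castSucc]
    refine Fin.lastCases ?_ (fun j => ?_) i
    · simp [Fmat, Amat, Fin.is_le]
    · have hj := ih' j
      rcases h01 (n + 1) le_rfl j with h | h <;> simp [Fmat, Amat, Fin.is_le, h, hj] <;> ring
end

section
/- Let F be an invertible n×n rational matrix, set A := −FᵀF, let u ∈ ℚⁿ be the all-ones vector, and assume (Fᵀu)_i = 2 + A_{ii} for all i. Let δ ∈ {0,1}ⁿ, set ι := u − δ, and let S ∈ ℤⁿ satisfy: (i) δ_i · ( S_i − 2 + (Au)_i − A_{ii} ) = 0 for every i (balanced condition); (ii) A_{ij} = 0 for all i ≠ j with δ_i = δ_j = 1 (no two dicritical components meet); (iii) Σ_{1 ≤ i < j ≤ n} A_{ij} = n − 1 (the dual graph is a tree). Then 2⟨S, δ⟩ − ⟨Aι, F⁻¹u⟩ − 2⟨δ, u⟩ − ⟨ι, Aι⟩ = 2. -/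
open Matrix

/-- The sum of all entries of a symmetric matrix is its trace plus twice the sum of the entries
above the diagonal. -/
theorem Matrix.IsSymm.sum_sum_eq_trace_add {m R : Type*} [Fintype m] [LinearOrder m]
    [CommSemiring R] {A : Matrix m m R} (hA : A.IsSymm) :
    ∑ i, ∑ j, A i j = ∑ i, A i i + 2 * ∑ i, ∑ j ∈ Finset.univ.filter (fun j => i < j), A i j := by
  have below : ∑ i, ∑ j, (if j < i then A i j else 0)
      = ∑ i, ∑ j, (if i < j then A i j else 0) := by
    rw [Finset.sum_comm]
    simp_rw [hA.apply]
  have split (i j : m) : A i j = (if i = j then A i j else 0) + (if i < j then A i j else 0)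
      + (if j < i then A i j else 0) := by
    rcases lt_trichotomy i j with h | h | h
    · simp [h, h.ne, h.not_gt]
    · simp [h]
    · simp [h, h.ne', h.not_gt]
  calc ∑ i, ∑ j, A i j = ∑ i, ∑ j, ((if i = j then A i j else 0) + (if i < j then A i j else 0)
        + (if j < i then A i j else 0)) :=
        Finset.sum_congr rfl fun i _ => Finset.sum_congr rfl fun j _ => split i j
    _ = _ := by
      simp only [Finset.sum_add_distrib, below, Finset.sum_filter, Finset.sum_ite_eq,
        Finset.mem_univ, if_true]
      ring

/-- If `A` has no off-diagonal entries on the support of a `0`-`1` vector `δ`, the quadratic form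
of `A` at `δ` only sees the diagonal of `A`. -/
theorem Matrix.dotProduct_mulVec_eq_sum_diag {m R : Type*} [Fintype m] [CommSemiring R]
    {A : Matrix m m R} {δ : m → R} (hδ : ∀ i, δ i = 0 ∨ δ i = 1)
    (hA : ∀ i j, i ≠ j → δ i = 1 → δ j = 1 → A i j = 0) :
    δ ⬝ᵥ (A *ᵥ δ) = ∑ i, δ i * A i i := by
  refine Finset.sum_congr rfl fun i _ => ?_
  rcases hδ i with hi | hi
  · simp [hi]
  · rw [mulVec, dotProduct, Finset.sum_eq_single i, hi, mul_one]
    · intro j _ hji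
      rcases hδ j with hj | hj
      · simp [hj]
      · simp [hA i j hji.symm hi hj]
    · simp

/-- **The identity β = 2**: with `A = −FᵀF`, `Fᵀu = 2u + diag A`, `δ ∈ {0,1}ⁿ`,
`ι = u − δ`, `S ∈ ℤⁿ` balanced, no two dicritical components meeting, and the dual
graph a tree, one has `2⟨S,δ⟩ − ⟨Aι, F⁻¹u⟩ − 2⟨δ,u⟩ − ⟨ι,Aι⟩ = 2`. -/
theorem beta_eq_two (n : ℕ) (F : Matrix (Fin n) (Fin n) ℚ) (hF : IsUnit F.det)
    (A : Matrix (Fin n) (Fin n) ℚ) (hA : A = -(Fᵀ * F))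
    (hFu : ∀ i, (Fᵀ *ᵥ (fun _ => 1)) i = 2 + A i i)
    (δ : Fin n → ℚ) (hδ : ∀ i, δ i = 0 ∨ δ i = 1)
    (ι : Fin n → ℚ) (hι : ι = (fun _ => 1) - δ)
    (S : Fin n → ℚ) (hSint : ∀ i, ∃ m : ℤ, S i = m)
    (hbal : ∀ i, δ i * (S i - 2 + (A *ᵥ (fun _ => 1)) i - A i i) = 0)
    (hdic : ∀ i j, i ≠ j → δ i = 1 → δ j = 1 → A i j = 0)
    (htree : ∑ i, ∑ j ∈ Finset.univ.filter (fun j => i < j), A i j = (n : ℚ) - 1) :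
    2 * (S ⬝ᵥ δ) - (A *ᵥ ι) ⬝ᵥ (F⁻¹ *ᵥ (fun _ => 1)) - 2 * (δ ⬝ᵥ (fun _ => 1))
      - ι ⬝ᵥ (A *ᵥ ι) = 2 := by
  have hsymm : A.IsSymm := by
    rw [hA, Matrix.IsSymm, transpose_neg, transpose_mul, transpose_transpose]
  have hadj (v w : Fin n → ℚ) : (A *ᵥ v) ⬝ᵥ w = v ⬝ᵥ (A *ᵥ w) := by
    rw [dotProduct_mulVec, ← mulVec_transpose, hsymm.eq]
  have hcross : (A *ᵥ ι) ⬝ᵥ (F⁻¹ *ᵥ (fun _ => 1)) = -∑ i, ι i * (2 + A i i) := by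
    have hinv : A *ᵥ (F⁻¹ *ᵥ (fun _ => 1)) = -(Fᵀ *ᵥ (fun _ => 1)) := by
      rw [mulVec_mulVec, hA, neg_mul, Matrix.mul_assoc, mul_nonsing_inv F hF, Matrix.mul_one,
        neg_mulVec]
    rw [hadj, hinv, dotProduct_neg]
    simp only [dotProduct, hFu]
  have hS : S ⬝ᵥ δ = ∑ i, (2 * δ i - δ i * (A *ᵥ (fun _ => 1)) i + δ i * A i i) :=
    Finset.sum_congr rfl fun i _ => by linear_combination hbal i
  have hones : (fun _ => 1) ⬝ᵥ (A *ᵥ (fun _ => 1)) = ∑ i, A i i + 2 * ((n : ℚ) - 1) := by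
    rw [← htree, ← hsymm.sum_sum_eq_trace_add]
    simp [dotProduct, mulVec]
  have hquad : ι ⬝ᵥ (A *ᵥ ι) = ∑ i, A i i + 2 * ((n : ℚ) - 1)
      - 2 * (δ ⬝ᵥ (A *ᵥ (fun _ => 1))) + ∑ i, δ i * A i i := by
    rw [hι, mulVec_sub, sub_dotProduct, dotProduct_sub, dotProduct_sub, hones,
      ← hadj, dotProduct_comm (A *ᵥ _), dotProduct_mulVec_eq_sum_diag hδ hdic]
    ring
  rw [hcross, hS, hquad, hι]
  simp only [dotProduct, Pi.sub_apply, sub_mul, one_mul, mul_one, mul_add,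
    Finset.sum_add_distrib, Finset.sum_sub_distrib, ← Finset.mul_sum, ← Finset.sum_mul,
    Finset.sum_const, Finset.card_univ, Fintype.card_fin, nsmul_eq_mul]
  ring
end

section
/- Let B be a symmetric bilinear form on ℚⁿ, L a linear form on ℚⁿ, and define M(S) := B(S,S) − L(S) + 1. Let v_1, …, v_r, w ∈ ℚⁿ be vectors such that B(v_i, v_j) = B(v_i, w) = B(w, w) for all 1 ≤ i < j ≤ r and all 1 ≤ i ≤ r. Then M( v_1 + ⋯ + v_r + (2 − r) w ) = M(2w) + Σ_{i=1}^r ( M(v_i) − M(w) ). -/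
/-- The key algebraic identity in the first proof of the Bifurcation Formula: if `B` is a
symmetric bilinear form on `ℚⁿ`, `L` a linear form, `M(S) = B(S,S) − L(S) + 1`, and
`v_1, …, v_r, w` satisfy `B(v_i, v_j) = B(v_i, w) = B(w,w)` for all `i < j` and all `i`,
then `M(v_1 + ⋯ + v_r + (2 − r)w) = M(2w) + Σ_i (M(v_i) − M(w))`. -/
theorem quadratic_bifurcation_identity (n r : ℕ)
    (B : LinearMap.BilinForm ℚ (Fin n → ℚ)) (hB : ∀ x y, B x y = B y x)
    (L : (Fin n → ℚ) →ₗ[ℚ] ℚ)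
    (M : (Fin n → ℚ) → ℚ) (hM : ∀ S, M S = B S S - L S + 1)
    (v : Fin r → Fin n → ℚ) (w : Fin n → ℚ)
    (hvv : ∀ i j : Fin r, i < j → B (v i) (v j) = B w w)
    (hvw : ∀ i : Fin r, B (v i) w = B w w) :
    M (∑ i, v i + ((2 : ℚ) - r) • w) = M (2 • w) + ∑ i, (M (v i) - M w) := by
  have hij : ∀ i j, B (v i) (v j) = B w w + if i = j then B (v i) (v i) - B w w else 0 := by
    intro i j
    rcases lt_trichotomy i j with h | rfl | h
    · simp [h.ne, hvv i j h]
    · simp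
    · simp [h.ne', hB (v i), hvv j i h]
  have hsum : B (∑ i, v i) (∑ i, v i) =
      ∑ i, B (v i) (v i) + ((r : ℚ) ^ 2 - r) * B w w := by
    simp only [map_sum, LinearMap.sum_apply]
    rw [Finset.sum_congr rfl fun i _ => Finset.sum_congr rfl fun j _ => hij j i]
    simp only [Finset.sum_add_distrib, Finset.sum_sub_distrib, Finset.sum_ite_eq',
      Finset.mem_univ, if_true, Finset.sum_const, Finset.card_univ, Fintype.card_fin,
      nsmul_eq_mul]
    ring
  have hsumw : B (∑ i, v i) w = r * B w w := by
    simp [map_sum, LinearMap.sum_apply, hvw]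
  simp only [hM, two_smul, map_add, LinearMap.add_apply, map_smul, LinearMap.smul_apply,
    hsum, hsumw, hB w (∑ i, v i), smul_eq_mul, Finset.sum_add_distrib, Finset.sum_sub_distrib,
    Finset.sum_const, Finset.card_univ, Fintype.card_fin, nsmul_eq_mul, map_sum L]
  ring
end
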